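/- Let K be a compact independent subset of ℝ, L = K ∪ (−K), and L_n the n-fold sumset of L. Then the Lebesgue measure of L_n is zero for every n ≥ 1. -/

import Mathlib

open MeasureTheory Set

def IsIndependentSet (K : Set ℝ) : Prop :=
  ∀ (k : ℕ) (y : Fin k → ℝ), Function.Injective y → (∀ i, y i ∈ K) →
    ∀ α : Fin k → ℤ, (∑ i, (α i : ℝ) * y i) = 0 → ∀ i, α i = 0

def sumset (L : Set ℝ) (n : ℕ) : Set ℝ :=
  {x | ∃ f : Fin n → ℝ, (∀ i, f i ∈ L) ∧ x = ∑ i, f i}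

lemma indep_linInd (K : Set ℝ) (h : IsIndependentSet K) :
    LinearIndependent ℤ (Subtype.val : K → ℝ) := by
  rw [linearIndependent_iff']
  intro s g hs i hi
  have e := s.equivFin
  have := h s.card (fun j => ((e.symm j : K) : ℝ))
    (fun a b hab => e.symm.injective (Subtype.ext (Subtype.ext hab)))
    (fun j => (e.symm j : K).2) (fun j => g (e.symm j)) (by
      rw [← hs, ← Finset.sum_coe_sort s]
      rw [← Equiv.sum_comp e.symm]
      simp) (e ⟨i, hi⟩)
  simpa using this

lemma sumset_repr (K : Set ℝ) (n : ℕ) (x : ℝ) (hx : x ∈ sumset (K ∪ (-K)) n) :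
    ∃ c : K →₀ ℤ, (∀ k, |c k| ≤ n) ∧
      Finsupp.linearCombination ℤ (Subtype.val : K → ℝ) c = x := by
  obtain ⟨f, hf, rfl⟩ := hx
  have h1 : ∀ i, ∃ c : K →₀ ℤ, (∀ k, |c k| ≤ 1) ∧
      Finsupp.linearCombination ℤ (Subtype.val : K → ℝ) c = f i := by
    classical
    intro i
    rcases hf i with h | h
    · refine ⟨Finsupp.single ⟨_, h⟩ 1, fun k => ?_, by simp⟩
      rw [Finsupp.single_apply]; split_ifs <;> simp
    · refine ⟨Finsupp.single ⟨_, h⟩ (-1), fun k => ?_, by simp⟩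
      rw [Finsupp.single_apply]; split_ifs <;> simp
  choose c hc hc' using h1
  refine ⟨∑ i, c i, fun k => ?_, by simp [map_sum, hc']⟩
  rw [Finsupp.finsetSum_apply]
  refine (Finset.abs_sum_le_sum_abs _ _).trans ?_
  refine (Finset.sum_le_sum fun i _ => hc i k).trans ?_
  simp

lemma sumset_compact (L : Set ℝ) (hL : IsCompact L) (n : ℕ) : IsCompact (sumset L n) := by
  have h := (isCompact_univ_pi (fun _ : Fin n => hL)).image
    (f := fun f : Fin n → ℝ => ∑ i, f i) (by fun_prop)
  convert h using 1
  ext x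
  simp [sumset, eq_comm]

theorem stmt1 (K : Set ℝ) (hK : IsCompact K) (hInd : IsIndependentSet K)
    (L : Set ℝ) (hL : L = K ∪ (-K)) (n : ℕ) (hn : 1 ≤ n) :
    volume (sumset L n) = 0 := by
  subst hL
  have hc := sumset_compact _ (hK.union hK.neg) n
  by_contra hne
  have hnh := Measure.sub_mem_nhds_zero_of_addHaar_pos_ne_top volume _ hc.measurableSet
    (pos_iff_ne_zero.2 hne) hc.measure_ne_top
  obtain ⟨ε, hε, hb⟩ := Metric.mem_nhds_iff.1 hnh
  have key : ∀ x, |x| < ε → ∃ c : K →₀ ℤ, (∀ k, |c k| ≤ 2 * n) ∧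
      Finsupp.linearCombination ℤ (Subtype.val : K → ℝ) c = x := by
    intro x hx
    obtain ⟨a, ha, b, hb', rfl⟩ := hb (show x ∈ Metric.ball 0 ε by simpa using hx)
    obtain ⟨c, h1, h2⟩ := sumset_repr K n a ha
    obtain ⟨d, h3, h4⟩ := sumset_repr K n b hb'
    refine ⟨c - d, fun k => ?_, by simp [h2, h4]⟩
    have := h1 k
    have := h3 k
    rw [Finsupp.sub_apply]
    exact (abs_sub _ _).trans (by linarith)
  have hp : (0:ℝ) < 2 * n + 1 := by positivity
  obtain ⟨d, hd, hd'⟩ := key (ε / 2) (by rw [abs_of_pos (by positivity)]; linarith)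
  obtain ⟨c, hc1, hc'⟩ := key (ε / 2 / (2 * n + 1)) (by
    rw [abs_of_pos (by positivity)]
    have : ε / 2 / (2 * n + 1) ≤ ε / 2 := div_le_self (by positivity) (by
      have : (0:ℝ) ≤ n := by positivity
      linarith)
    linarith)
  have heq : ((2 * n + 1 : ℤ)) • c = d := by
    apply indep_linInd K hInd
    rw [map_smul, hc', hd', zsmul_eq_mul]
    push_cast
    field_simp
  have hz : c = 0 := by
    ext k
    have h := hd k
    rw [← heq, Finsupp.smul_apply, smul_eq_mul, abs_mul, abs_of_pos (by positivity)] at h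
    by_contra hk
    have : 1 ≤ |c k| := Int.one_le_abs hk
    nlinarith
  rw [hz, map_zero] at hc'
  have : 0 < ε / 2 / (2 * n + 1) := by positivity
  linarith
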